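/- arXiv:2202.02844 — 2 statements merged into one kernel-verified Lean document; each statement's English description precedes it below -/
import Mathlib

section
/- Let R be a finite commutative Gorenstein ring. Then: (a) for every R-module A, and for any generator φ of R^dual as an R-module, the map Hom_R(A,R) → Hom_ℤ(A, ℚ/ℤ) given by ψ ↦ φ∘ψ is an isomorphism of R-modules; in particular, if A is finite then #A = #Hom_R(A,R). (b) The contravariant functor A ↦ Hom_R(A,R) from finite R-modules to finite R-modules is exact: it sends short exact sequences of finite R-modules to short exact sequences. -/
/-!
Let `R` be a finite commutative ring. For an `R`-module `A` set `A^⊥ = Hom_R(A, R)` and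
`A^dual = Hom_ℤ(A, ℚ/ℤ)` (the character module `CharacterModule A`), both `R`-modules via
`(rφ)(a) = φ(ra)`. `R` is Gorenstein if `R^dual` is a free `R`-module of rank one,
i.e. `R ≃ₗ[R] R^dual`.
-/

/-- Repackage an additive homomorphism `A →+ ℚ/ℤ` as an element of `CharacterModule A`. -/
def toChar {A : Type*} [AddCommGroup A] (f : A →+ AddCircle (1 : ℚ)) : CharacterModule A := f

theorem aux_bij {R : Type*} [CommRing R] [Finite R]
    (hGor : Nonempty (R ≃ₗ[R] CharacterModule R)) (φ : CharacterModule R)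
    (hφ : Submodule.span R {φ} = ⊤) :
    Function.Bijective (fun r : R => r • φ) := by
  obtain ⟨e⟩ := hGor
  have hs : Function.Surjective (fun r : R => r • φ) := by
    intro c
    have : c ∈ Submodule.span R {φ} := by rw [hφ]; trivial
    exact Submodule.mem_span_singleton.1 this
  have : Function.Surjective (fun r : R => e.symm (r • φ)) := e.symm.surjective.comp hs
  have h2 := Finite.injective_iff_surjective.2 this
  refine ⟨fun a b h => h2 (congrArg e.symm h), hs⟩

theorem aux_main {R : Type*} [CommRing R] (φ : CharacterModule R)
    (hb : Function.Bijective (fun r : R => r • φ))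
    (A : Type*) [AddCommGroup A] [Module R A] :
    Function.Bijective (fun ψ : A →ₗ[R] R => toChar (φ.comp ψ.toAddMonoidHom)) := by
  have ev : ∀ (ψ : A →ₗ[R] R) (a : A), toChar (φ.comp ψ.toAddMonoidHom) a = φ (ψ a) :=
    fun _ _ => rfl
  constructor
  · intro ψ ψ' h
    ext a
    apply hb.1
    ext r
    have := DFunLike.congr_fun h (r • a)
    simp only [ev, map_smul] at this
    simpa [mul_comm] using this
  · intro c
    choose s hs using fun a : A => hb.2 (CharacterModule.dual (LinearMap.toSpanSingleton R A a) c)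
    have hs' : ∀ a r, φ (s a * r) = c (r • a) := fun a r => DFunLike.congr_fun (hs a) r
    refine ⟨{ toFun := s, map_add' := ?_, map_smul' := ?_ }, ?_⟩
    · intro x y
      apply hb.1
      ext r
      simp only [CharacterModule.smul_apply, smul_eq_mul, hs', add_mul, map_add, smul_add]
    · intro t x
      apply hb.1
      ext r
      have : t * s x * r = s x * (r * t) := by ring
      simp only [CharacterModule.smul_apply, smul_eq_mul, hs', RingHom.id_apply, this, smul_smul]
    · ext a
      have := hs' a 1
      rw [mul_one, one_smul] at this
      exact this

noncomputable def auxCast : AddCircle (1 : ℚ) →+ AddCircle (1 : ℝ) :=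
  QuotientAddGroup.map _ _ (Rat.castHom ℝ).toAddMonoidHom (by
    rintro x ⟨n, rfl⟩
    exact ⟨n, by simp⟩)

theorem auxCast_inj : Function.Injective auxCast := by
  rw [injective_iff_map_eq_zero]
  intro x
  induction x using QuotientAddGroup.induction_on with
  | H q =>
    intro h
    have h' : ((q : ℝ) : AddCircle (1 : ℝ)) = 0 := h
    obtain ⟨n, hn⟩ := (AddCircle.coe_eq_zero_iff _).1 h'
    refine (AddCircle.coe_eq_zero_iff _).2 ⟨n, ?_⟩
    simp only [zsmul_eq_mul, mul_one] at hn ⊢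
    exact_mod_cast hn

noncomputable def auxChar {A : Type*} [AddCommGroup A] (c : CharacterModule A) : AddChar A ℂ where
  toFun a := (AddCircle.toCircle (auxCast (c a)) : ℂ)
  map_zero_eq_one' := by simp
  map_add_eq_mul' a b := by simp [AddCircle.toCircle_add]

theorem auxChar_inj {A : Type*} [AddCommGroup A] :
    Function.Injective (auxChar (A := A)) := by
  intro c d h
  ext a
  have h1 : (AddCircle.toCircle (auxCast (c a)) : ℂ) = AddCircle.toCircle (auxCast (d a)) :=
    DFunLike.congr_fun h a
  exact auxCast_inj (AddCircle.injective_toCircle one_ne_zero (Subtype.ext h1))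

theorem aux_fin_le (A : Type*) [AddCommGroup A] [Finite A] :
    Finite (CharacterModule A) ∧ Nat.card (CharacterModule A) ≤ Nat.card A := by
  cases nonempty_fintype A
  have : Finite (CharacterModule A) := Finite.of_injective _ auxChar_inj
  refine ⟨this, (Nat.card_le_card_of_injective _ auxChar_inj).trans ?_⟩
  have := AddChar.card_eq (α := A)
  simp [Nat.card_eq_fintype_card, this]

def auxEval {A : Type*} [AddCommGroup A] (a : A) : CharacterModule (CharacterModule A) :=
  toChar { toFun := fun c => c a, map_zero' := rfl, map_add' := fun _ _ => rfl }

theorem aux_card (A : Type*) [AddCommGroup A] [Finite A] :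
    Nat.card (CharacterModule A) = Nat.card A := by
  obtain ⟨h1, h2⟩ := aux_fin_le A
  obtain ⟨h3, h4⟩ := aux_fin_le (CharacterModule A)
  have : Function.Injective (auxEval (A := A)) := by
    intro a b h
    rw [← sub_eq_zero]
    apply CharacterModule.eq_zero_of_character_apply
    intro c
    have : c a = c b := DFunLike.congr_fun h c
    rw [map_sub, this, sub_self]
  exact le_antisymm h2 ((Nat.card_le_card_of_injective _ this).trans h4)

/-- **(a)** For a finite commutative Gorenstein ring `R`, every `R`-module `A`, and every
generator `φ` of `R^dual` as an `R`-module, the map `Hom_R(A,R) → Hom_ℤ(A, ℚ/ℤ)`,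
`ψ ↦ φ ∘ ψ`, is an isomorphism of `R`-modules; in particular `#A = #Hom_R(A,R)` for finite `A`.
**(b)** The contravariant functor `A ↦ Hom_R(A,R)` on finite `R`-modules is exact: it sends
short exact sequences of finite `R`-modules to short exact sequences. -/
theorem gorenstein_dual_iso_and_exact
    (R : Type*) [CommRing R] [Finite R]
    (hGor : Nonempty (R ≃ₗ[R] CharacterModule R)) :
    -- (a) : `ψ ↦ φ ∘ ψ` is an isomorphism of `R`-modules `Hom_R(A,R) ≃ Hom_ℤ(A, ℚ/ℤ)`
    (∀ (A : Type) [AddCommGroup A] [Module R A],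
      ∀ φ : CharacterModule R, Submodule.span R {φ} = ⊤ →
        (∀ ψ ψ' : A →ₗ[R] R,
            toChar (φ.comp (ψ + ψ').toAddMonoidHom) =
              toChar (φ.comp ψ.toAddMonoidHom) + toChar (φ.comp ψ'.toAddMonoidHom)) ∧
        (∀ (r : R) (ψ : A →ₗ[R] R),
            toChar (φ.comp (r • ψ).toAddMonoidHom) =
              r • toChar (φ.comp ψ.toAddMonoidHom)) ∧
        Function.Bijective
          (fun ψ : A →ₗ[R] R => toChar (φ.comp ψ.toAddMonoidHom))) ∧
    -- (a), "in particular": `#A = #A^⊥` for finite `A`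
    (∀ (A : Type) [AddCommGroup A] [Module R A], Finite A →
        Nat.card A = Nat.card (A →ₗ[R] R)) ∧
    -- (b) : exactness of the duality functor on finite `R`-modules
    (∀ (A B C : Type) [AddCommGroup A] [Module R A] [AddCommGroup B] [Module R B]
        [AddCommGroup C] [Module R C], Finite A → Finite B → Finite C →
      ∀ (f : A →ₗ[R] B) (g : B →ₗ[R] C),
        Function.Injective f → Function.Exact f g → Function.Surjective g →
          (Function.Injective (fun ψ : C →ₗ[R] R => ψ.comp g) ∧
           Function.Exact (fun ψ : C →ₗ[R] R => ψ.comp g)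
             (fun ψ : B →ₗ[R] R => ψ.comp f) ∧
           Function.Surjective (fun ψ : B →ₗ[R] R => ψ.comp f))) := by
  have key : ∃ φ : CharacterModule R, Function.Bijective (fun r : R => r • φ) := by
    obtain ⟨e⟩ := hGor
    refine ⟨e 1, ?_⟩
    have : (fun r : R => r • e 1) = e := by
      funext r
      rw [← map_smul, smul_eq_mul, mul_one]
    rw [this]
    exact e.bijective
  obtain ⟨φ₀, hφ₀⟩ := key
  refine ⟨?_, ?_, ?_⟩
  · intro A _ _ φ hφ
    refine ⟨?_, ?_, aux_main φ (aux_bij hGor φ hφ) A⟩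
    · intro ψ ψ'
      ext a
      exact map_add φ (ψ a) (ψ' a)
    · intro r ψ
      ext a
      exact congrArg φ (map_smul ψ r a).symm
  · intro A _ _ hA
    rw [← aux_card A]
    exact (Nat.card_congr (Equiv.ofBijective _ (aux_main φ₀ hφ₀ A))).symm
  · intro A B C _ _ _ _ _ _ _ _ _ f g hf hfg hg
    refine ⟨?_, ?_, ?_⟩
    · intro ψ ψ' h
      ext x
      obtain ⟨y, rfl⟩ := hg x
      exact LinearMap.congr_fun h y
    · intro ψ
      constructor
      · intro h
        have hk : LinearMap.ker g ≤ LinearMap.ker ψ := by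
          intro b hb
          obtain ⟨a, rfl⟩ := (hfg b).1 hb
          exact LinearMap.congr_fun h a
        choose t ht using hg
        have hw : ∀ b b', g b = g b' → ψ b = ψ b' := by
          intro b b' hbb
          have : b - b' ∈ LinearMap.ker ψ := hk (by simp [hbb])
          simpa [sub_eq_zero] using this
        refine ⟨{ toFun := fun c => ψ (t c), map_add' := ?_, map_smul' := ?_ }, ?_⟩
        · intro x y
          rw [← map_add]
          exact hw _ _ (by simp [ht])
        · intro r x
          rw [RingHom.id_apply, ← map_smul]
          exact hw _ _ (by simp [ht])
        · ext b
          exact hw _ _ (ht _)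
      · rintro ⟨θ, rfl⟩
        ext a
        have : g (f a) = 0 := (hfg _).2 ⟨a, rfl⟩
        simp [this]
    · intro ψ
      obtain ⟨c, hc⟩ := CharacterModule.dual_surjective_of_injective f hf
        (toChar (φ₀.comp ψ.toAddMonoidHom))
      obtain ⟨θ, hθ⟩ := (aux_main φ₀ hφ₀ B).2 c
      refine ⟨θ, (aux_main φ₀ hφ₀ A).1 ?_⟩
      refine Eq.trans ?_ hc
      exact congrArg (CharacterModule.dual f) hθ
end

section
/- Let R be a finite commutative Gorenstein ring and let A be a finite R-module. If there exists r ∈ R such that r·Hom_R(A,R) = 0, then rA = 0. -/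
/-!
Let `R` be a finite commutative ring. For an `R`-module `A` set `A^⊥ = Hom_R(A, R)` and
`A^dual = Hom_ℤ(A, ℚ/ℤ)` (the character module `CharacterModule A`), both `R`-modules.
`R` is Gorenstein if `R^dual` is a free `R`-module of rank one, i.e. `R ≃ₗ[R] R^dual`.
-/

/-- If `R` is a finite commutative Gorenstein ring, `A` a finite `R`-module, and `r ∈ R`
annihilates `Hom_R(A, R)`, then `r` annihilates `A`. -/
theorem gorenstein_annihilator_of_dual
    (R : Type*) [CommRing R] [Finite R]
    (hGor : Nonempty (R ≃ₗ[R] CharacterModule R))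
    (A : Type*) [AddCommGroup A] [Module R A] [Finite A]
    (r : R) (h : ∀ ψ : A →ₗ[R] R, r • ψ = 0) :
    ∀ a : A, r • a = 0 := by
  obtain ⟨e⟩ := hGor
  intro a
  apply CharacterModule.eq_zero_of_character_apply
  intro c
  let ψ : A →ₗ[R] CharacterModule R :=
    { toFun := fun x => CharacterModule.dual (LinearMap.toSpanSingleton R A x) c
      map_add' := by
        intro x y
        apply CharacterModule.ext
        intro s
        change c (s • (x + y)) = c (s • x) + c (s • y)
        rw [smul_add, map_add]
      map_smul' := by
        intro t x
        apply CharacterModule.ext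
        intro s
        change c (s • t • x) = c ((t • s) • x)
        rw [smul_smul, smul_eq_mul, mul_comm] }
  have h1 := LinearMap.congr_fun (h (e.symm.toLinearMap ∘ₗ ψ)) a
  have h2 : e.symm (r • ψ a) = 0 := by
    rw [map_smul]
    exact h1
  have h3 : r • ψ a = 0 := e.symm.map_eq_zero_iff.mp h2
  have h4 : (r • ψ a) 1 = 0 := by rw [h3]; rfl
  have h5 : c ((r • (1 : R)) • a) = 0 := h4
  simpa using h5
end
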